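/- arXiv:2101.06226 — 6 statements merged into one kernel-verified Lean document; each statement's English description precedes it below -/
import Mathlib

section
/- Let x and n be integers greater than 1. Then x^n − 1 has a large primitive prime divisor, except exactly in the following cases: (1) n = 2 and x = 2^s·3^t − 1 for some natural numbers s ≥ 0 and t ∈ {0,1} with s ≥ 2 if t = 0; (2) x = 2 and n ∈ {4, 6, 10, 12, 18}; (3) x = 3 and n ∈ {4, 6}; (4) x = 5 and n = 6. -/
/-- For integers `x, n ≥ 2`, a prime `r` is a primitive prime divisor of `x^n - 1` if
`r ∣ x^n - 1` and `r` does not divide `x^i - 1` for any `1 ≤ i < n`. -/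
def IsPrimitivePrimeDivisor (x n r : ℕ) : Prop :=
  r.Prime ∧ r ∣ x ^ n - 1 ∧ ∀ i, 1 ≤ i → i < n → ¬ r ∣ x ^ i - 1

/-- `r` is a large primitive prime divisor of `x^n - 1` if it is a primitive prime divisor
and moreover `r > n + 1` or `r^2 ∣ x^n - 1`. -/
def IsLargePrimitivePrimeDivisor (x n r : ℕ) : Prop :=
  IsPrimitivePrimeDivisor x n r ∧ (n + 1 < r ∨ r ^ 2 ∣ x ^ n - 1)

lemma chk : ∀ n : ℕ, n < 136 → 3 ≤ n → 2 ^ n.totient ≤ 2 * n * (n+1) →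
   n ∈ [3,4,5,6,7,8,9,10,12,14,15,16,18,20,24,30] := by
  decide +kernel

lemma tot_L1 (n : ℕ) : ¬ 2 ∣ n → ¬ 3 ∣ n → n ^ 2 ≤ n.totient ^ 3 := by
  induction n using Nat.recOnPosPrimePosCoprime with
  | prime_pow p k hp hk =>
    intro h2 h3
    have hp2 : p ≠ 2 := by rintro rfl; exact h2 (dvd_pow_self 2 hk.ne')
    have hp3 : p ≠ 3 := by rintro rfl; exact h3 (dvd_pow_self 3 hk.ne')
    have hp4 : p ≠ 4 := by rintro rfl; revert hp; norm_num
    have h5 : 5 ≤ p := by have := hp.two_le; omega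
    rw [Nat.totient_prime_pow hp hk]
    obtain ⟨j, rfl⟩ : ∃ j, k = j + 1 := ⟨k-1, by omega⟩
    obtain ⟨q, rfl⟩ : ∃ q, p = q + 1 := ⟨p-1, by omega⟩
    simp only [Nat.add_sub_cancel]
    have h1 : (q+1)^2 ≤ q^3 := by nlinarith [Nat.mul_le_mul_right q (show 4 ≤ q by omega)]
    have h2 : (q+1)^(2*j) ≤ (q+1)^(3*j) := Nat.pow_le_pow_right (by omega) (by omega)
    calc ((q+1)^(j+1))^2 = (q+1)^(2*j) * (q+1)^2 := by ring
      _ ≤ (q+1)^(3*j) * q^3 := Nat.mul_le_mul h2 h1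
      _ = _ := by ring
  | zero => simp
  | one => simp
  | coprime a b ha hb hab iha ihb =>
    intro h2 h3
    rw [Nat.totient_mul hab, mul_pow, mul_pow]
    exact Nat.mul_le_mul (iha (fun h => h2 (h.mul_right _)) (fun h => h3 (h.mul_right _)))
      (ihb (fun h => h2 (h.mul_left _)) (fun h => h3 (h.mul_left _)))

lemma tot_pow2 (a : ℕ) : (2^a)^2 ≤ 4 * (2^a).totient ^ 3 := by
  rcases a with _ | j
  · simp
  rw [Nat.totient_prime_pow_succ Nat.prime_two]
  have h2 : 2^(2*j) ≤ 2^(3*j) := Nat.pow_le_pow_right (by omega) (by omega)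
  calc (2^(j+1))^2 = 4 * 2^(2*j) := by ring
    _ ≤ 4 * 2^(3*j) := by omega
    _ = _ := by ring

lemma tot_pow3 (a : ℕ) : 8 * (3^a)^2 ≤ 9 * (3^a).totient ^ 3 := by
  rcases a with _ | j
  · simp
  rw [Nat.totient_prime_pow_succ Nat.prime_three]
  have h2 : 3^(2*j) ≤ 3^(3*j) := Nat.pow_le_pow_right (by omega) (by omega)
  calc 8 * (3^(j+1))^2 = 72 * 3^(2*j) := by ring
    _ ≤ 72 * 3^(3*j) := by omega
    _ = _ := by ring

lemma tot_bound (n : ℕ) (hn : n ≠ 0) : 2 * n ^ 2 ≤ 9 * n.totient ^ 3 := by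
  obtain ⟨a, m, hm, rfl⟩ := Nat.exists_eq_pow_mul_and_not_dvd hn 2 (by norm_num)
  have hm0 : m ≠ 0 := by rintro rfl; simp at hm
  obtain ⟨b, l, hl, rfl⟩ := Nat.exists_eq_pow_mul_and_not_dvd hm0 3 (by norm_num)
  have c1 : Nat.Coprime (2^a) (3^b*l) :=
    Nat.Coprime.pow_left _ ((Nat.Prime.coprime_iff_not_dvd Nat.prime_two).2 hm)
  have c2 : Nat.Coprime (3^b) l :=
    Nat.Coprime.pow_left _ ((Nat.Prime.coprime_iff_not_dvd Nat.prime_three).2 hl)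
  rw [Nat.totient_mul c1, Nat.totient_mul c2]
  have h1 := tot_pow2 a
  have h2 := tot_pow3 b
  have h3 := tot_L1 l (fun h => hm (h.mul_left _)) hl
  have := Nat.mul_le_mul h1 (Nat.mul_le_mul h2 h3)
  have e1 : (2^a)^2 * (8 * (3^b)^2 * l^2) = 4 * (2 * (2^a * (3^b*l))^2) := by ring
  have e2 : 4 * (2^a).totient^3 * (9 * (3^b).totient^3 * l.totient^3) =
    4 * (9 * ((2^a).totient * ((3^b).totient * l.totient))^3) := by ring
  rw [e1, e2] at this
  omega

lemma pow_cube (k : ℕ) (hk : 17 ≤ k) : 18 * k^3 < 2^k := by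
  induction k, hk using Nat.le_induction with
  | base => norm_num
  | succ k hk ih =>
    have h1 : (k+1)^3 ≤ 2 * k^3 := by
      nlinarith [Nat.mul_le_mul_right (k^2) hk, Nat.mul_le_mul_right k hk]
    have h2 : 2^(k+1) = 2 * 2^k := by ring
    omega

lemma exc_list (n : ℕ) (hn : 3 ≤ n) (h : 2 ^ n.totient ≤ 2 * n * (n+1)) :
   n ∈ [3,4,5,6,7,8,9,10,12,14,15,16,18,20,24,30] := by
  have hb := tot_bound n (by omega)
  have h4 : 2 * n * (n+1) ≤ 4 * n^2 := by nlinarith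
  by_cases hk : 17 ≤ n.totient
  · have := pow_cube _ hk
    omega
  · have h16 : n.totient ^ 3 ≤ 16^3 := Nat.pow_le_pow_left (by omega) 3
    refine chk n ?_ hn h
    by_contra hc
    push Not at hc
    nlinarith
open Polynomial

lemma half_pow_prod (n : ℕ) :
    (1/4 : ℝ) + (1/2)^(n+2) ≤ ∏ e ∈ Finset.Icc 1 (n+1), (1 - (1/2 : ℝ)^e) := by
  induction n with
  | zero => norm_num
  | succ k ih =>
    rw [Finset.prod_Icc_succ_top (by omega)]
    have hu : (1/2 : ℝ)^(k+2) ≤ 1/4 := by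
      rw [pow_add]
      have : (1/2 : ℝ)^k ≤ 1 := pow_le_one₀ (by norm_num) (by norm_num)
      linarith
    have hu0 : (0:ℝ) < (1/2 : ℝ)^(k+2) := by positivity
    have e1 : (1/2 : ℝ)^(k+1+2) = (1/2)^(k+2) * (1/2) := by ring
    have e2 : (1/2 : ℝ)^(k+1+1) = (1/2)^(k+2) := by ring
    rw [e1, e2]
    set u := (1/2 : ℝ)^(k+2)
    have : (1/4 + u) * (1 - u) ≤ (∏ e ∈ Finset.Icc 1 (k+1), (1 - (1/2 : ℝ)^e)) * (1 - u) :=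
      mul_le_mul_of_nonneg_right ih (by linarith)
    nlinarith

lemma cyclo_two_real (n : ℕ) (hn : 0 < n) :
    (2:ℝ) ^ n.totient ≤ 4 * (cyclotomic n ℝ).eval 2 := by
  have key := (ArithmeticFunction.prod_eq_iff_prod_pow_moebius_eq_of_nonzero (R := ℝ)
    (f := fun d => (cyclotomic d ℝ).eval 2 / 2 ^ d.totient) (g := fun n => 1 - (1/2)^n)
    (fun n _ => by
      have := cyclotomic_pos' n (R := ℝ) (x := 2) (by norm_num)
      positivity)
    (fun n hn => by
      have : (1/2 : ℝ)^n < 1 := pow_lt_one₀ (by norm_num) (by norm_num) hn.ne'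
      simp only [ne_eq]
      linarith)).1 (fun n hn => by
        rw [Finset.prod_div_distrib, Finset.prod_pow_eq_pow_sum, Nat.sum_totient,
          ← eval_prod, prod_cyclotomic_eq_X_pow_sub_one hn]
        simp only [eval_sub, eval_pow, eval_X, eval_one]
        field_simp
        rw [mul_sub, ← mul_pow]; norm_num) n hn
  rw [Nat.prod_divisorsAntidiagonal' (f := fun a b => (1 - (1/2 : ℝ)^b) ^ (ArithmeticFunction.moebius a))] at key
  have hpos : ∀ e : ℕ, 0 < e → 0 < 1 - (1/2 : ℝ)^e := fun e he => by
    have : (1/2 : ℝ)^e < 1 := pow_lt_one₀ (by norm_num) (by norm_num) he.ne'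
    linarith
  have hle : ∀ e : ℕ, 1 - (1/2 : ℝ)^e ≤ 1 := fun e => by
    have : (0 : ℝ) < (1/2 : ℝ)^e := by positivity
    linarith
  have h1 : ∏ e ∈ n.divisors, (1 - (1/2 : ℝ)^e) ≤ (cyclotomic n ℝ).eval 2 / 2 ^ n.totient := by
    rw [← key]
    refine Finset.prod_le_prod (fun e he => (hpos e (Nat.pos_of_mem_divisors he)).le) ?_
    intro e he
    have hp := hpos e (Nat.pos_of_mem_divisors he)
    have hmu : ArithmeticFunction.moebius (n / e) ≤ 1 :=
      (abs_le.1 (ArithmeticFunction.abs_moebius_le_one)).2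
    calc (1 - (1/2 : ℝ)^e) = (1 - (1/2 : ℝ)^e) ^ (1 : ℤ) := (zpow_one _).symm
      _ ≤ _ := zpow_le_zpow_right_of_le_one₀ hp (hle e) hmu
  have h2 : ∏ e ∈ Finset.Icc 1 n, (1 - (1/2 : ℝ)^e) ≤ ∏ e ∈ n.divisors, (1 - (1/2 : ℝ)^e) := by
    have hsub : n.divisors ⊆ Finset.Icc 1 n := fun e he =>
      Finset.mem_Icc.2 ⟨Nat.pos_of_mem_divisors he, Nat.divisor_le he⟩
    rw [← Finset.prod_sdiff hsub]
    refine mul_le_of_le_one_left (Finset.prod_nonneg fun e he =>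
      (hpos e (Nat.pos_of_mem_divisors he)).le) (Finset.prod_le_one (fun e he => ?_)
        (fun e _ => hle e))
    exact (hpos e (Finset.mem_Icc.1 (Finset.mem_sdiff.1 he).1).1).le
  obtain ⟨k, rfl⟩ : ∃ k, n = k + 1 := ⟨n-1, by omega⟩
  have h3 := half_pow_prod k
  have h4 : (0:ℝ) < (1/2)^(k+2) := by positivity
  have h5 : (1/4 : ℝ) ≤ (cyclotomic (k+1) ℝ).eval 2 / 2 ^ (k+1).totient := by linarith
  rw [le_div_iff₀ (by positivity)] at h5
  linarith

/-- absolute value of the cyclotomic value -/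
noncomputable def cyc (n x : ℕ) : ℕ := ((cyclotomic n ℤ).eval (x : ℤ)).natAbs

lemma cyc_cast (n x : ℕ) (hx : 2 ≤ x) : ((cyc n x : ℕ) : ℤ) = (cyclotomic n ℤ).eval (x : ℤ) := by
  unfold cyc
  rw [Int.natCast_natAbs, abs_of_pos]
  exact cyclotomic_pos' n (by exact_mod_cast hx)

lemma cyc_pos (n x : ℕ) (hx : 2 ≤ x) : 0 < cyc n x := by
  have : (0:ℤ) < cyc n x := by
    rw [cyc_cast n x hx]; exact cyclotomic_pos' n (by exact_mod_cast hx)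
  exact_mod_cast this

lemma cyc_ge (n x : ℕ) (hn : 2 ≤ n) (hx : 2 ≤ x) : (x-1) ^ n.totient < cyc n x :=
  sub_one_pow_totient_lt_natAbs_cyclotomic_eval hn (by omega)

lemma cyc_lower (n x : ℕ) (hn : 2 ≤ n) (hx : 2 ≤ x) : 2 ^ n.totient ≤ 4 * cyc n x := by
  rcases hx.eq_or_lt with rfl | hx3
  · have h := cyclo_two_real n (by omega)
    have e : (cyclotomic n ℝ).eval 2 = (((cyc n 2 : ℕ) : ℤ) : ℝ) := by
      rw [cyc_cast n 2 le_rfl, ← map_cyclotomic_int n ℝ]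
      have := eval_intCast_map (Int.castRingHom ℝ) (cyclotomic n ℤ) 2
      simpa using this
    rw [e] at h
    exact_mod_cast h
  · have h1 := cyc_ge n x hn hx
    have h2 : 2 ^ n.totient ≤ (x-1)^n.totient := Nat.pow_le_pow_left (by omega) _
    omega

lemma cyc_mul (n p x : ℕ) (hx : 2 ≤ x) (hp : p.Prime) (h : ¬ p ∣ n) :
    cyc n (x^p) = cyc (n*p) x * cyc n x := by
  have := congrArg (eval (x:ℤ)) (cyclotomic_expand_eq_cyclotomic_mul hp h ℤ)
  rw [expand_eval, eval_mul, ← cyc_cast _ _ hx, ← cyc_cast _ _ hx, ← Nat.cast_pow, ← cyc_cast] at this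
  · exact_mod_cast this
  · exact hx.trans (Nat.le_self_pow hp.ne_zero x)

lemma cyc_expand (n p x : ℕ) (hx : 2 ≤ x) (hp : p.Prime) (h : p ∣ n) :
    cyc n (x^p) = cyc (n*p) x := by
  have := congrArg (eval (x:ℤ)) (cyclotomic_expand_eq_cyclotomic hp h ℤ)
  rw [expand_eval, ← cyc_cast _ _ hx, ← Nat.cast_pow, ← cyc_cast] at this
  · exact_mod_cast this
  · exact hx.trans (Nat.le_self_pow hp.ne_zero x)

lemma cyc_one (x : ℕ) (hx : 2 ≤ x) : cyc 1 x = x - 1 := by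
  have := cyc_cast 1 x hx
  simp at this; omega

lemma cyc_two (x : ℕ) (hx : 2 ≤ x) : cyc 2 x = x + 1 := by
  have := cyc_cast 2 x hx
  simp at this; omega

lemma cyc_four (x : ℕ) (hx : 2 ≤ x) : cyc 4 x = x ^ 2 + 1 := by
  rw [show 4 = 2 * 2 from rfl, ← cyc_expand 2 2 x hx Nat.prime_two (by norm_num), cyc_two]
  nlinarith

lemma cyc_three (x : ℕ) (hx : 2 ≤ x) : cyc 3 x = x ^ 2 + x + 1 := by
  have := cyc_cast 3 x hx
  simp [cyclotomic_three] at this; exact_mod_cast this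

lemma cyc_six (x : ℕ) (hx : 2 ≤ x) : cyc 6 x + x = x ^ 2 + 1 := by
  have := cyc_cast 6 x hx
  simp [cyclotomic_six] at this
  have h : (cyc 6 x : ℤ) + x = x^2+1 := by rw [this]; ring
  exact_mod_cast h

lemma cyc_five_two : cyc 5 2 = 31 := by
  have := cyc_mul 1 5 2 le_rfl Nat.prime_five (by norm_num)
  rw [cyc_one _ (by norm_num), cyc_one _ (by norm_num)] at this
  norm_num at this; omega

lemma cyc_eight_two : cyc 8 2 = 17 := by
  have := cyc_expand 4 2 2 le_rfl Nat.prime_two (by norm_num)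
  rw [cyc_four _ (by norm_num)] at this
  norm_num at this; omega

lemma cyc_sixteen_two : cyc 16 2 = 257 := by
  have := cyc_expand 8 2 2 le_rfl Nat.prime_two (by norm_num)
  have h := cyc_expand 4 2 (2^2) (by norm_num) Nat.prime_two (by norm_num)
  rw [cyc_four _ (by norm_num)] at h
  norm_num at this h; omega

lemma cyc_ten_three : cyc 10 3 = 61 := by
  have := cyc_mul 2 5 3 (by norm_num) Nat.prime_five (by norm_num)
  rw [cyc_two _ (by norm_num), cyc_two _ (by norm_num)] at this
  norm_num at this; omega

lemma cyc_twelve_three : cyc 12 3 = 73 := by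
  have := cyc_expand 6 2 3 (by norm_num) Nat.prime_two (by norm_num)
  have h := cyc_six 9 (by norm_num)
  norm_num at this h; omega

lemma cyc_thirty_two : cyc 30 2 = 331 := by
  have := cyc_mul 6 5 2 (by norm_num) Nat.prime_five (by norm_num)
  have h := cyc_six 2 (by norm_num)
  have h' := cyc_six 32 (by norm_num)
  have h2 : cyc 6 2 = 3 := by omega
  rw [h2] at this
  norm_num at this h'; omega

lemma dvd_pow_sub_one_iff (r x i : ℕ) (hx : 2 ≤ x) : r ∣ x ^ i - 1 ↔ (x : ZMod r) ^ i = 1 := by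
  have h1 : 1 ≤ x ^ i := Nat.one_le_pow _ _ (by omega)
  rw [← ZMod.natCast_eq_zero_iff, Nat.cast_sub h1, sub_eq_zero]
  simp

lemma cyc_dvd (n x : ℕ) (hx : 2 ≤ x) : cyc n x ∣ x ^ n - 1 := by
  have h1 : 1 ≤ x ^ n := Nat.one_le_pow _ _ (by omega)
  have h := map_dvd (evalRingHom (x:ℤ)) (cyclotomic.dvd_X_pow_sub_one n ℤ)
  simp only [coe_evalRingHom, eval_sub, eval_pow, eval_X, eval_one] at h
  rw [← cyc_cast _ _ hx] at h
  zify [h1]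
  exact h

lemma root_of_dvd (r k m x : ℕ) (hx : 2 ≤ x) (hr : r.Prime) (hm : ¬ r ∣ m)
    (h : r ∣ cyc (r^k*m) x) : IsPrimitiveRoot (x : ZMod r) m := by
  have := Fact.mk hr
  have : NeZero (m : ZMod r) := ⟨by rwa [Ne, ZMod.natCast_eq_zero_iff]⟩
  rw [← isRoot_cyclotomic_prime_pow_mul_iff_of_charP (k := k) (p := r), IsRoot.def,
    ← map_cyclotomic_int]
  have h2 := eval_intCast_map (Int.castRingHom (ZMod r)) (cyclotomic (r^k*m) ℤ) (x:ℤ)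
  simp only [Int.cast_natCast, eq_intCast] at h2
  have h3 := cyc_cast (r^k*m) x hx
  rw [h2, ← h3, Int.cast_natCast, ZMod.natCast_eq_zero_iff]
  exact h

lemma order_dvd (r m x : ℕ) (hr : r.Prime) (hm : 0 < m) (h : IsPrimitiveRoot (x : ZMod r) m) :
    m ∣ r - 1 := by
  have := Fact.mk hr
  exact h.dvd_of_pow_eq_one _ (ZMod.pow_card_sub_one_eq_one (h.ne_zero hm.ne'))

lemma prim_of_root (r n x : ℕ) (hx : 2 ≤ x) (hr : r.Prime)
    (h : IsPrimitiveRoot (x : ZMod r) n) : IsPrimitivePrimeDivisor x n r := by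
  refine ⟨hr, (dvd_pow_sub_one_iff r x n hx).2 h.pow_eq_one, fun i hi hin hd => ?_⟩
  have := Nat.le_of_dvd (by omega) (h.dvd_of_pow_eq_one _ ((dvd_pow_sub_one_iff r x i hx).1 hd))
  omega

lemma root_of_prim (r n x : ℕ) (hx : 2 ≤ x) (hn : 0 < n)
    (h : IsPrimitivePrimeDivisor x n r) : IsPrimitiveRoot (x : ZMod r) n := by
  refine IsPrimitiveRoot.mk_of_lt _ hn ((dvd_pow_sub_one_iff r x n hx).1 h.2.1) fun l hl hln he => ?_
  exact h.2.2 l hl hln ((dvd_pow_sub_one_iff r x l hx).2 he)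

/-- `cyc n x` divides the geometric sum. -/
lemma cyc_dvd_geom (r d x : ℕ) (hx : 2 ≤ x) (hr : 2 ≤ r) (hd : 0 < d) :
    ((cyc (d * r) x : ℕ) : ℤ) ∣ ∑ i ∈ Finset.range r, ((x:ℤ)^d)^i * 1^(r-1-i) := by
  have h := map_dvd (evalRingHom (x:ℤ))
    (X_pow_sub_one_mul_cyclotomic_dvd_X_pow_sub_one_of_dvd ℤ (d := d) (n := d * r)
      (Nat.mem_properDivisors.2 ⟨dvd_mul_right _ _, by nlinarith⟩))
  simp only [coe_evalRingHom, eval_sub, eval_pow, eval_X, eval_one, eval_mul] at h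
  rw [← cyc_cast _ _ hx, pow_mul] at h
  have hg := geom_sum₂_mul ((x:ℤ)^d) 1 r
  rw [one_pow] at hg
  rw [← hg, mul_comm] at h
  refine Int.dvd_of_mul_dvd_mul_right ?_ h
  have : (1:ℤ) < (x:ℤ)^d := one_lt_pow₀ (by exact_mod_cast hx) hd.ne'
  omega

lemma nonprim (r n x : ℕ) (hx : 2 ≤ x) (hn : 3 ≤ n) (hr : r.Prime) (h : r ∣ cyc n x)
    (hnp : ¬ IsPrimitivePrimeDivisor x n r) :
    r ∣ n ∧ ¬ r * r ∣ cyc n x ∧ ∀ q : ℕ, q.Prime → q ∣ n → q ≤ r := by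
  obtain ⟨k, m, hm, rfl⟩ := Nat.exists_eq_pow_mul_and_not_dvd (show n ≠ 0 by omega) r hr.ne_one
  have hroot := root_of_dvd r k m x hx hr hm h
  have hm0 : 0 < m := Nat.pos_of_ne_zero (by rintro rfl; simp at hm)
  have hord := order_dvd r m x hr hm0 hroot
  have hk : k ≠ 0 := by
    rintro rfl
    rw [pow_zero, one_mul] at hnp
    exact hnp (prim_of_root r m x hx hr hroot)
  obtain ⟨j, rfl⟩ : ∃ j, k = j + 1 := ⟨k - 1, by omega⟩
  have hmr : m < r := by
    have := Nat.le_of_dvd (by have := hr.two_le; omega) hord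
    have := hr.two_le
    omega
  have hrn : r ∣ r ^ (j+1) * m := (dvd_pow_self r (by omega)).mul_right m
  refine ⟨hrn, fun hsq => ?_, ?_⟩
  · have he : r ^ (j+1) * m = (r^j * m) * r := by ring
    have hd0 : 0 < r^j*m := Nat.mul_pos (pow_pos hr.pos _) hm0
    rw [he] at hsq
    have hg := cyc_dvd_geom r (r^j*m) x hx hr.two_le hd0
    have hsq' : ((r:ℤ))^2 ∣ ∑ i ∈ Finset.range r, ((x:ℤ)^(r^j*m))^i * 1^(r-1-i) := by
      refine dvd_trans ?_ hg
      rw [pow_two]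
      exact_mod_cast hsq
    have h1 : r ∣ x ^ (r^j*m) - 1 := by
      rw [dvd_pow_sub_one_iff r x _ hx, mul_comm, pow_mul, hroot.pow_eq_one, one_pow]
    have h1' : (r:ℤ) ∣ (x:ℤ)^(r^j*m) - 1 := by
      have : 1 ≤ x ^ (r^j*m) := Nat.one_le_pow _ _ (by omega)
      zify [this] at h1
      exact h1
    have hrx : ¬ (r:ℤ) ∣ (x:ℤ)^(r^j*m) := by
      intro hc
      have h3 : (r:ℤ) ∣ 1 := by
        have := dvd_sub hc h1'
        simpa using this
      have : r ∣ 1 := by exact_mod_cast h3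
      exact hr.one_lt.ne' (Nat.dvd_one.1 this)
    rcases hr.eq_two_or_odd' with h2 | hodd
    · subst h2
      have hm1 : m = 1 := by omega
      subst hm1
      obtain ⟨l, rfl⟩ : ∃ l, j = l + 1 := ⟨j - 1, by
        rcases j with _ | j
        · norm_num at hn
        · rfl⟩
      simp [Finset.sum_range_succ] at hsq'
      have hxo : Odd ((x:ℤ)^(2^l)) := by
        rw [← Int.not_even_iff_odd, even_iff_two_dvd]
        intro hc
        apply hrx
        refine hc.trans (pow_dvd_pow _ ?_)
        rw [mul_one]
        exact Nat.pow_le_pow_right (by norm_num) (by omega)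
      have := Int.sq_mod_four_eq_one_of_odd hxo
      rw [← pow_mul, ← pow_succ] at this
      omega
    · have hmul := emultiplicity_geom_sum₂_eq_one (Nat.prime_iff_prime_int.1 hr) hodd h1' hrx
      have h2 := le_emultiplicity_of_pow_dvd hsq'
      rw [hmul] at h2
      exact absurd (by exact_mod_cast h2 : (2:ℕ) ≤ 1) (by norm_num)
  · intro q hq hqn
    rcases (Nat.Prime.dvd_mul hq).1 hqn with h1 | h1
    · exact (Nat.le_of_dvd hr.pos (hq.dvd_of_dvd_pow h1))
    · exact (Nat.le_of_dvd hm0 h1).trans hmr.le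

lemma cyc_cases (n x : ℕ) (hx : 2 ≤ x) (hn : 3 ≤ n)
    (hno : ¬ ∃ r : ℕ, IsLargePrimitivePrimeDivisor x n r) :
    ∃ P : ℕ, P.Prime ∧ P ∣ n ∧ (cyc n x ∣ P ∨ ((n+1).Prime ∧ cyc n x ∣ P * (n+1))) := by
  have hprim : ∀ r, IsPrimitivePrimeDivisor x n r → r = n + 1 ∧ ¬ r * r ∣ cyc n x := by
    intro r hr
    have hd := order_dvd r n x hr.1 (by omega) (root_of_prim r n x hx (by omega) hr)
    have h2 := hr.1.two_le
    have hle := Nat.le_of_dvd (by omega) hd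
    have hnl : ¬ IsLargePrimitivePrimeDivisor x n r := fun h => hno ⟨r, h⟩
    unfold IsLargePrimitivePrimeDivisor at hnl
    push Not at hnl
    obtain ⟨h3, h4⟩ := hnl hr
    refine ⟨by omega, fun hc => h4 ?_⟩
    rw [pow_two]
    exact hc.trans (cyc_dvd n x hx)
  have hsf : Squarefree (cyc n x) := by
    rw [Nat.squarefree_iff_prime_squarefree]
    intro r hr hc
    by_cases hp : IsPrimitivePrimeDivisor x n r
    · exact (hprim r hp).2 hc
    · exact (nonprim r n x hx hn hr ((dvd_mul_right _ _).trans hc) hp).2.1 hc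
  obtain ⟨P, hP, hPn, hPu⟩ : ∃ P : ℕ, P.Prime ∧ P ∣ n ∧
      ∀ r : ℕ, r.Prime → r ∣ cyc n x → ¬ IsPrimitivePrimeDivisor x n r → r = P := by
    by_cases hex : ∃ r : ℕ, r.Prime ∧ r ∣ cyc n x ∧ ¬ IsPrimitivePrimeDivisor x n r
    · obtain ⟨P, hP, hd, hnp⟩ := hex
      have h1 := nonprim P n x hx hn hP hd hnp
      refine ⟨P, hP, h1.1, fun r hr hrd hrp => ?_⟩
      have h2 := nonprim r n x hx hn hr hrd hrp
      exact le_antisymm (h1.2.2 r hr h2.1) (h2.2.2 P hP h1.1)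
    · push Not at hex
      exact ⟨n.minFac, Nat.minFac_prime (by omega), n.minFac_dvd,
        fun r hr hd hnp => absurd (hex r hr hd) hnp⟩
  refine ⟨P, hP, hPn, ?_⟩
  have hprod := Nat.prod_primeFactors_of_squarefree hsf
  have hPlt : P ≤ n := Nat.le_of_dvd (by omega) hPn
  by_cases hex : ∃ r, r ∣ cyc n x ∧ IsPrimitivePrimeDivisor x n r
  · obtain ⟨r, hrd, hr⟩ := hex
    have hpr : (n+1).Prime := (hprim r hr).1 ▸ hr.1
    right
    refine ⟨hpr, ?_⟩
    have hsub : (cyc n x).primeFactors ⊆ {P, n+1} := by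
      intro q hq
      rw [Nat.mem_primeFactors] at hq
      by_cases hp : IsPrimitivePrimeDivisor x n q
      · simp [(hprim q hp).1]
      · simp [hPu q hq.1 hq.2.1 hp]
    rw [← hprod, ← Finset.prod_pair (f := fun p => p) (show P ≠ n + 1 by omega)]
    exact Finset.prod_dvd_prod_of_subset _ _ _ hsub
  · left
    push Not at hex
    have hsub : (cyc n x).primeFactors ⊆ {P} := by
      intro q hq
      rw [Nat.mem_primeFactors] at hq
      simp [hPu q hq.1 hq.2.1 (hex q hq.2.1)]
    rw [← hprod, ← Finset.prod_singleton (fun p : ℕ => p) P]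
    exact Finset.prod_dvd_prod_of_subset _ _ _ hsub

lemma main_ge_three (n x : ℕ) (hx : 2 ≤ x) (hn : 3 ≤ n)
    (hno : ¬ ∃ r : ℕ, IsLargePrimitivePrimeDivisor x n r) :
    (x = 2 ∧ (n = 4 ∨ n = 6 ∨ n = 10 ∨ n = 12 ∨ n = 18)) ∨
         (x = 3 ∧ (n = 4 ∨ n = 6)) ∨ (x = 5 ∧ n = 6) := by
  obtain ⟨P, hP, hPn, hc⟩ := cyc_cases n x hx hn hno
  have hlow := cyc_lower n x (by omega) hx
  have hge := cyc_ge n x (by omega) hx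
  have hPle : P ≤ n := Nat.le_of_dvd (by omega) hPn
  have hge3 : 3 ≤ x → 2 ^ n.totient < cyc n x := fun h3 =>
    (Nat.pow_le_pow_left (by omega) _).trans_lt hge
  have hge4 : 4 ≤ x → 3 ^ n.totient < cyc n x := fun h3 =>
    (Nat.pow_le_pow_left (by omega) _).trans_lt hge
  have hP0 := hP.pos
  have hcc : (cyc n x ≤ P ∧ ¬ (n+1).Prime) ∨ ((n+1).Prime ∧ cyc n x ∣ P * (n+1)) := by
    rcases hc with h | h
    · by_cases hp : (n+1).Prime
      · exact Or.inr ⟨hp, h.mul_right _⟩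
      · exact Or.inl ⟨Nat.le_of_dvd hP0 h, hp⟩
    · exact Or.inr h
  rcases hcc with ⟨hle, hnp⟩ | ⟨hp, hdvd⟩
  · have hmem := exc_list n hn (by nlinarith)
    clear hc hno hge
    simp only [List.mem_cons, List.not_mem_nil, or_false] at hmem
    rcases hmem with rfl | rfl | rfl | rfl | rfl | rfl | rfl | rfl | rfl | rfl | rfl | rfl | rfl |
      rfl | rfl | rfl
    · rw [cyc_three x hx] at hle
      nlinarith
    · norm_num at hnp
    · rw [show Nat.totient 5 = 4 by decide] at hge3
      rcases hx.eq_or_lt with rfl | h3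
      · rw [cyc_five_two] at hle; omega
      · have := hge3 h3; omega
    · norm_num at hnp
    · rw [show Nat.totient 7 = 6 by decide] at hlow; omega
    · have : P = 2 := (Nat.prime_dvd_prime_iff_eq hP Nat.prime_two).1
        (hP.dvd_of_dvd_pow (show P ∣ 2^3 from hPn))
      rw [show Nat.totient 8 = 4 by decide] at hge3
      rcases hx.eq_or_lt with rfl | h3
      · rw [cyc_eight_two] at hle; omega
      · have := hge3 h3; omega
    · rw [show Nat.totient 9 = 6 by decide] at hlow; omega
    · norm_num at hnp
    · norm_num at hnp
    · rw [show Nat.totient 14 = 6 by decide] at hlow; omega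
    · rw [show Nat.totient 15 = 8 by decide] at hlow; omega
    · norm_num at hnp
    · norm_num at hnp
    · rw [show Nat.totient 20 = 8 by decide] at hlow; omega
    · rw [show Nat.totient 24 = 8 by decide] at hlow; omega
    · norm_num at hnp
  · have heven : n % 2 = 0 := by
      rcases hp.eq_two_or_odd with h | h <;> omega
    have hP2 : 2 * P ≤ n := by
      obtain ⟨c, rfl⟩ := hPn
      have hc1 : c ≠ 1 := by
        rintro rfl
        rw [mul_one] at heven hn
        rcases hP.eq_two_or_odd with h | h <;> omega
      have hc0 : c ≠ 0 := by rintro rfl; simp at hn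
      have : 2 ≤ c := by omega
      nlinarith
    have hle : cyc n x ≤ P * (n+1) := Nat.le_of_dvd (by positivity) hdvd
    have hmem := exc_list n hn (by nlinarith)
    clear hc hno hge
    simp only [List.mem_cons, List.not_mem_nil, or_false] at hmem
    rcases hmem with rfl | rfl | rfl | rfl | rfl | rfl | rfl | rfl | rfl | rfl | rfl | rfl | rfl |
      rfl | rfl | rfl <;> try (exfalso; revert hp heven; norm_num; done)
    · -- 4
      rw [cyc_four x hx] at hle
      have : x < 4 := by nlinarith
      interval_cases x <;> simp
    · -- 6
      have h6 := cyc_six x hx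
      have : x < 6 := by nlinarith
      interval_cases x <;> try (simp; done)
      have h13 : cyc 6 4 = 13 := by omega
      rw [h13] at hdvd
      exfalso
      have hPs : P ≤ 3 := by omega
      interval_cases P <;> revert hdvd <;> norm_num
    · -- 10
      rw [show Nat.totient 10 = 4 by decide] at hge4
      have hx4 : x < 4 := by
        by_contra h4
        have := hge4 (by omega)
        omega
      interval_cases x
      · simp
      · rw [cyc_ten_three] at hle; omega
    · -- 12
      have hPs : P ≤ 3 := by
        have : P ∣ 2^2 * 3 := hPn
        rcases (Nat.Prime.dvd_mul hP).1 this with h | h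
        · have := Nat.le_of_dvd (by norm_num) (hP.dvd_of_dvd_pow h); omega
        · exact Nat.le_of_dvd (by norm_num) h
      rw [show Nat.totient 12 = 4 by decide] at hge4
      have hx4 : x < 4 := by
        by_contra h4
        have := hge4 (by omega)
        omega
      interval_cases x
      · simp
      · rw [cyc_twelve_three] at hle; omega
    · -- 16
      have : P = 2 := (Nat.prime_dvd_prime_iff_eq hP Nat.prime_two).1
        (hP.dvd_of_dvd_pow (show P ∣ 2^4 from hPn))
      rw [show Nat.totient 16 = 8 by decide] at hge3
      rcases hx.eq_or_lt with rfl | h3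
      · rw [cyc_sixteen_two] at hle; omega
      · have := hge3 h3; omega
    · -- 18
      have hPs : P ≤ 3 := by
        have : P ∣ 2 * 3^2 := hPn
        rcases (Nat.Prime.dvd_mul hP).1 this with h | h
        · have := Nat.le_of_dvd (by norm_num) h; omega
        · exact Nat.le_of_dvd (by norm_num) (hP.dvd_of_dvd_pow h)
      rw [show Nat.totient 18 = 6 by decide] at hge3
      rcases hx.eq_or_lt with rfl | h3
      · simp
      · have := hge3 h3; omega
    · -- 30
      have hPs : P ≤ 5 := by
        have : P ∣ 2 * 3 * 5 := hPn
        rcases (Nat.Prime.dvd_mul hP).1 this with h | h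
        · rcases (Nat.Prime.dvd_mul hP).1 h with h | h
          · have := Nat.le_of_dvd (by norm_num) h; omega
          · have := Nat.le_of_dvd (by norm_num) h; omega
        · exact Nat.le_of_dvd (by norm_num) h
      rw [show Nat.totient 30 = 8 by decide] at hge3
      rcases hx.eq_or_lt with rfl | h3
      · rw [cyc_thirty_two] at hle; omega
      · have := hge3 h3; omega

lemma sq_case (x : ℕ) (hx : 2 ≤ x) :
    (∃ r : ℕ, IsLargePrimitivePrimeDivisor x 2 r) ↔
      ¬ ∃ s t : ℕ, t ≤ 1 ∧ (t = 0 → 2 ≤ s) ∧ x = 2 ^ s * 3 ^ t - 1 := by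
  have hfac : x ^ 2 - 1 = (x + 1) * (x - 1) := by
    have := Nat.sq_sub_sq x 1
    simpa using this
  constructor
  · rintro ⟨r, ⟨hr, hd, hi⟩, hl⟩ ⟨s, t, ht, hts, hxe⟩
    have hnd : ¬ r ∣ x - 1 := by simpa using hi 1 le_rfl (by norm_num)
    have hx1 : x + 1 = 2^s * 3^t := by
      have : 0 < 2^s * 3^t := by positivity
      omega
    rw [hfac] at hd hl
    have hrd : r ∣ x + 1 := (hr.dvd_mul.1 hd).resolve_right hnd
    have hr2 : r ≠ 2 := by
      rintro rfl
      omega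
    have hr3 : r = 3 := by
      rw [hx1] at hrd
      rcases hr.dvd_mul.1 hrd with h | h
      · exact absurd ((Nat.prime_dvd_prime_iff_eq hr Nat.prime_two).1 (hr.dvd_of_dvd_pow h)) hr2
      · exact (Nat.prime_dvd_prime_iff_eq hr Nat.prime_three).1 (hr.dvd_of_dvd_pow h)
    subst hr3
    rcases hl with h | h
    · omega
    · have hcop : Nat.Coprime (3^2) (x-1) :=
        Nat.Coprime.pow_left _ ((Nat.Prime.coprime_iff_not_dvd Nat.prime_three).2 hnd)
      have h9 : 3^2 ∣ x + 1 := hcop.dvd_of_dvd_mul_right h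
      rw [hx1] at h9
      have hcop2 : Nat.Coprime (3^2) (2^s) :=
        Nat.Coprime.pow _ _ (by norm_num)
      have h9' : 3^2 ∣ 3^t := hcop2.dvd_of_dvd_mul_left h9
      have := (Nat.pow_dvd_pow_iff_le_right (by norm_num)).1 h9'
      omega
  · intro hno
    by_contra hnl
    apply hno
    have key : ∀ r : ℕ, r.Prime → r ≠ 2 → r ∣ x + 1 → r ≤ 3 ∧ ¬ r^2 ∣ x + 1 := by
      intro r hr h2 hd
      have hnd : ¬ r ∣ x - 1 := by
        intro hc
        have h3 : r ∣ (x+1) - (x-1) := Nat.dvd_sub hd hc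
        rw [show (x+1) - (x-1) = 2 by omega] at h3
        exact h2 ((Nat.prime_dvd_prime_iff_eq hr Nat.prime_two).1 h3)
      have hprim : IsPrimitivePrimeDivisor x 2 r := by
        refine ⟨hr, hfac ▸ hd.mul_right _, fun i hi hi2 => ?_⟩
        obtain rfl : i = 1 := by omega
        simpa using hnd
      constructor
      · by_contra hc
        exact hnl ⟨r, hprim, Or.inl (by omega)⟩
      · intro hc
        exact hnl ⟨r, hprim, Or.inr (hfac ▸ hc.mul_right _)⟩
    obtain ⟨s, m, hm, hxm⟩ := Nat.exists_eq_pow_mul_and_not_dvd (show x + 1 ≠ 0 by omega) 2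
      (by norm_num)
    have hm0 : m ≠ 0 := by rintro rfl; simp at hm
    obtain ⟨t, l, hl, rfl⟩ := Nat.exists_eq_pow_mul_and_not_dvd hm0 3 (by norm_num)
    have hl1 : l = 1 := by
      by_contra hne
      have hp := Nat.minFac_prime hne
      have hd := Nat.minFac_dvd l
      have hp2 : l.minFac ≠ 2 := fun h => hm ((h ▸ hd).mul_left _)
      have hp3 : l.minFac ≠ 3 := fun h => hl (h ▸ hd)
      have := (key _ hp hp2 (hxm ▸ (hd.mul_left _).mul_left _)).1
      have := hp.two_le
      omega
    subst hl1
    rw [mul_one] at hxm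
    have ht : t ≤ 1 := by
      by_contra hc
      have h9 : 3^2 ∣ x + 1 := by
        rw [hxm]; exact (pow_dvd_pow 3 (by omega)).mul_left _
      exact (key 3 Nat.prime_three (by norm_num) ((dvd_pow_self 3 (by norm_num)).trans h9)).2 h9
    refine ⟨s, t, ht, ?_, by omega⟩
    rintro rfl
    by_contra hs
    have : 2^s ≤ 2^1 := Nat.pow_le_pow_right (by norm_num) (by omega)
    simp at hxm
    omega

lemma not_large (x n : ℕ) (l : List ℕ) (hp : ∀ q ∈ l, q.Prime) (he : x ^ n - 1 = l.prod)
    (hbad : ∀ q ∈ l, (∃ i < n, 1 ≤ i ∧ q ∣ x ^ i - 1) ∨ (q ≤ n + 1 ∧ ¬ q ^ 2 ∣ x ^ n - 1)) :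
    ¬ ∃ r : ℕ, IsLargePrimitivePrimeDivisor x n r := by
  rintro ⟨r, ⟨hr, hd, hi⟩, hl⟩
  have hmem : r ∈ l := by
    rw [he] at hd
    obtain ⟨q, hq, hrq⟩ := (Prime.dvd_prod_iff hr.prime).1 hd
    rwa [(Nat.prime_dvd_prime_iff_eq hr (hp q hq)).1 hrq]
  rcases hbad r hmem with ⟨i, hin, h1, h2⟩ | ⟨h1, h2⟩
  · exact hi i h1 hin h2
  · rcases hl with h | h
    · omega
    · exact h2 h

/-- Feit's theorem on large primitive prime divisors: for integers `x, n > 1`,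
`x^n - 1` has a large primitive prime divisor except exactly in the listed cases. -/
theorem exists_largePrimitivePrimeDivisor_iff (x n : ℕ) (hx : 2 ≤ x) (hn : 2 ≤ n) :
    (∃ r : ℕ, IsLargePrimitivePrimeDivisor x n r) ↔
      ¬ ((n = 2 ∧ ∃ s t : ℕ, t ≤ 1 ∧ (t = 0 → 2 ≤ s) ∧ x = 2 ^ s * 3 ^ t - 1) ∨
         (x = 2 ∧ (n = 4 ∨ n = 6 ∨ n = 10 ∨ n = 12 ∨ n = 18)) ∨
         (x = 3 ∧ (n = 4 ∨ n = 6)) ∨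
         (x = 5 ∧ n = 6)) := by
  rcases hn.eq_or_lt with rfl | hn3
  · rw [sq_case x hx]
    simp
  · constructor
    · intro hex hexc
      rcases hexc with ⟨h, _⟩ | ⟨rfl, rfl | rfl | rfl | rfl | rfl⟩ | ⟨rfl, rfl | rfl⟩ | ⟨rfl, rfl⟩
      · omega
      · exact not_large 2 4 [3, 5] (by norm_num) (by norm_num) (by decide) hex
      · exact not_large 2 6 [3, 3, 7] (by norm_num) (by norm_num) (by decide) hex
      · exact not_large 2 10 [3, 11, 31] (by norm_num) (by norm_num) (by decide) hex
      · exact not_large 2 12 [3, 3, 5, 7, 13] (by norm_num) (by norm_num) (by decide) hex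
      · exact not_large 2 18 [3, 3, 3, 7, 19, 73] (by norm_num) (by norm_num) (by decide) hex
      · exact not_large 3 4 [2, 2, 2, 2, 5] (by norm_num) (by norm_num) (by decide) hex
      · exact not_large 3 6 [2, 2, 2, 7, 13] (by norm_num) (by norm_num) (by decide) hex
      · exact not_large 5 6 [2, 2, 2, 3, 3, 7, 31] (by norm_num) (by norm_num) (by decide) hex
    · intro h
      by_contra hno
      exact h (Or.inr (main_ge_three n x hx hn3 hno))
end

section
/- For every finite group G, m(G) = m_pp(G); that is, the largest cardinality of an independent generating set of G equals the largest cardinality of a pp-independent generating set of G. -/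
/-- An element of a group is a `pp`-element if its order is a prime power. -/
def IsPPElement {G : Type*} [Group G] (g : G) : Prop := IsPrimePow (orderOf g)

/-- A subset `X` of a group `G` is independent if `⟨Y, Φ(G)⟩ ≠ ⟨X, Φ(G)⟩` for every
proper subset `Y` of `X`. -/
def IsIndependent (G : Type*) [Group G] (X : Set G) : Prop :=
  ∀ Y : Set G, Y ⊂ X → Subgroup.closure Y ⊔ frattini G ≠ Subgroup.closure X ⊔ frattini G

/-- `m(G)`: the largest cardinality of an independent generating set of `G`. -/
noncomputable def mIndep (G : Type*) [Group G] : ℕ :=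
  sSup {n | ∃ X : Set G, IsIndependent G X ∧ Subgroup.closure X = ⊤ ∧ X.ncard = n}

/-- `m_pp(G)`: the largest cardinality of a `pp`-independent generating set of `G`. -/
noncomputable def mPPIndep (G : Type*) [Group G] : ℕ :=
  sSup {n | ∃ X : Set G, IsIndependent G X ∧ (∀ x ∈ X, IsPPElement x) ∧
    Subgroup.closure X = ⊤ ∧ X.ncard = n}

theorem mem_closure_pp {G : Type*} [Group G] (n : ℕ) : 0 < n → ∀ g : G, orderOf g = n →
    g ∈ Subgroup.closure {y : G | IsPPElement y ∧ y ∈ Subgroup.zpowers g} := by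
  induction n using Nat.recOnPosPrimePosCoprime with
  | prime_pow p n hp hn =>
    intro _ g hg
    refine Subgroup.subset_closure ⟨?_, Subgroup.mem_zpowers g⟩
    unfold IsPPElement
    rw [hg]
    exact hp.isPrimePow.pow hn.ne'
  | zero => intro h; omega
  | one =>
    intro _ g hg
    rw [orderOf_eq_one_iff.mp hg]
    exact one_mem _
  | coprime a b ha hb hab iha ihb =>
    intro _ g hg
    have key : ∀ k : ℕ, Subgroup.closure {y : G | IsPPElement y ∧ y ∈ Subgroup.zpowers (g ^ k)}
        ≤ Subgroup.closure {y : G | IsPPElement y ∧ y ∈ Subgroup.zpowers g} := by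
      intro k
      apply Subgroup.closure_mono
      rintro y ⟨h1, h2⟩
      exact ⟨h1, (Subgroup.zpowers_le.mpr (Subgroup.npow_mem_zpowers g k)) h2⟩
    have h1 : orderOf (g ^ b) = a := by
      rw [orderOf_pow_of_dvd (by omega) (by rw [hg]; exact Dvd.intro_left a rfl), hg]
      exact Nat.mul_div_cancel _ (by omega)
    have h2 : orderOf (g ^ a) = b := by
      rw [orderOf_pow_of_dvd (by omega) (by rw [hg]; exact Dvd.intro b rfl), hg]
      exact Nat.mul_div_cancel_left _ (by omega)
    have m1 := key b (iha (by omega) _ h1)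
    have m2 := key a (ihb (by omega) _ h2)
    have hbez : (1 : ℤ) = a * Nat.gcdA a b + b * Nat.gcdB a b := by
      rw [← Nat.gcd_eq_gcd_ab, hab.gcd_eq_one]; rfl
    have : g = (g ^ a) ^ (Nat.gcdA a b) * (g ^ b) ^ (Nat.gcdB a b) := by
      rw [← zpow_natCast g a, ← zpow_natCast g b, ← zpow_mul, ← zpow_mul, ← zpow_add, ← hbez,
        zpow_one]
    have hm := mul_mem (zpow_mem m2 (Nat.gcdA a b)) (zpow_mem m1 (Nat.gcdB a b))
    rwa [← this] at hm

theorem exists_pp {G : Type*} [Group G] [Finite G] (X : Set G) (hX : IsIndependent G X)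
    (hg : Subgroup.closure X = ⊤) : ∃ Y : Set G, IsIndependent G Y ∧ (∀ x ∈ Y, IsPPElement x) ∧
    Subgroup.closure Y = ⊤ ∧ X.ncard ≤ Y.ncard := by
  classical
  let S : Set G := {y | IsPPElement y ∧ ∃ x ∈ X, y ∈ Subgroup.zpowers x}
  have hS : Subgroup.closure S = ⊤ := by
    rw [eq_top_iff, ← hg, Subgroup.closure_le]
    intro x hx
    refine Subgroup.closure_mono ?_ (mem_closure_pp (orderOf x) (orderOf_pos x) x rfl)
    rintro y ⟨h1, h2⟩
    exact ⟨h1, x, hx, h2⟩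
  obtain ⟨Y, hYS, hmin⟩ := exists_minimal_le_of_wellFoundedLT
    (fun Y : Set G => Subgroup.closure Y = ⊤) S hS
  refine ⟨Y, ?_, fun y hy => (hYS hy).1, hmin.prop, ?_⟩
  · intro Z hZ h
    have hZt : Subgroup.closure Z = ⊤ := by
      apply frattini_nongenerating
      rw [h, hmin.prop, top_sup_eq]
    exact hZ.2 (hmin.le_of_le hZt hZ.1)
  · have hf : ∀ y : G, ∃ x, y ∈ Y → x ∈ X ∧ y ∈ Subgroup.zpowers x := by
      intro y
      by_cases hy : y ∈ Y
      · obtain ⟨_, x, hx, hxy⟩ := hYS hy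
        exact ⟨x, fun _ => ⟨hx, hxy⟩⟩
      · exact ⟨1, fun h => absurd h hy⟩
    choose f hf using hf
    have hsub : f '' Y ⊆ X := by
      rintro _ ⟨y, hy, rfl⟩
      exact (hf y hy).1
    have hgen : Subgroup.closure (f '' Y) = ⊤ := by
      rw [eq_top_iff, ← hmin.prop, Subgroup.closure_le]
      intro y hy
      exact (Subgroup.zpowers_le.mpr (Subgroup.subset_closure (Set.mem_image_of_mem f hy))) (hf y hy).2
    have heq : f '' Y = X := by
      by_contra hne
      exact hX _ (hsub.ssubset_of_ne hne) (by rw [hgen, hg])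
    rw [← heq]
    exact Set.ncard_image_le Y.toFinite

/-- For every finite group `G`, `m(G) = m_pp(G)`. -/
theorem mIndep_eq_mPPIndep (G : Type*) [Group G] [Finite G] :
    mIndep G = mPPIndep G := by
  have bdd : BddAbove {n | ∃ X : Set G, IsIndependent G X ∧ Subgroup.closure X = ⊤ ∧
      X.ncard = n} := by
    refine ⟨Nat.card G, ?_⟩
    rintro _ ⟨X, _, _, rfl⟩
    exact Set.ncard_le_card X
  have hsub : {n | ∃ X : Set G, IsIndependent G X ∧ (∀ x ∈ X, IsPPElement x) ∧
      Subgroup.closure X = ⊤ ∧ X.ncard = n} ⊆ {n | ∃ X : Set G, IsIndependent G X ∧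
      Subgroup.closure X = ⊤ ∧ X.ncard = n} := by
    rintro _ ⟨X, h1, _, h2, h3⟩
    exact ⟨X, h1, h2, h3⟩
  have hne : {n | ∃ X : Set G, IsIndependent G X ∧
      Subgroup.closure X = ⊤ ∧ X.ncard = n}.Nonempty := by
    obtain ⟨Y, -, hmin⟩ := exists_minimal_le_of_wellFoundedLT
      (fun Y : Set G => Subgroup.closure Y = ⊤) Set.univ Subgroup.closure_univ
    refine ⟨_, Y, ?_, hmin.prop, rfl⟩
    intro Z hZ h
    have hZt : Subgroup.closure Z = ⊤ := by
      apply frattini_nongenerating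
      rw [h, hmin.prop, top_sup_eq]
    exact hZ.2 (hmin.le_of_le hZt hZ.1)
  unfold mIndep mPPIndep
  apply le_antisymm
  · apply csSup_le hne
    rintro _ ⟨X, h1, h2, rfl⟩
    obtain ⟨Y, k1, k2, k3, k4⟩ := exists_pp X h1 h2
    exact k4.trans (le_csSup (bdd.mono hsub) ⟨Y, k1, k2, k3, rfl⟩)
  · obtain ⟨_, X, h1, h2, rfl⟩ := hne
    obtain ⟨Y, k1, k2, k3, k4⟩ := exists_pp X h1 h2
    exact csSup_le_csSup bdd ⟨_, Y, k1, k2, k3, rfl⟩ hsub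
end

section
/- A finite group G is a B_pp-group if and only if G/Φ(G) is a B_pp-group, where Φ(G) is the Frattini subgroup of G. -/
/-- A `pp`-base of `G` is an independent generating set all of whose elements are
`pp`-elements. -/
def IsPPBase (G : Type*) [Group G] (X : Set G) : Prop :=
  IsIndependent G X ∧ (∀ x ∈ X, IsPPElement x) ∧ Subgroup.closure X = ⊤

/-- A group is a `B_pp`-group if every two `pp`-bases have the same cardinality. -/
def IsBpp (G : Type*) [Group G] : Prop :=
  ∀ X Y : Set G, IsPPBase G X → IsPPBase G Y → X.ncard = Y.ncard

theorem isPPBase_iff_aux (G : Type*) [Group G] [Finite G] (X : Set G) :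
    IsPPBase G X ↔ (∀ Y : Set G, Y ⊂ X → Subgroup.closure Y ≠ ⊤) ∧
      (∀ x ∈ X, IsPPElement x) ∧ Subgroup.closure X = ⊤ := by
  unfold IsPPBase IsIndependent
  constructor
  · rintro ⟨h1, h2, h3⟩
    refine ⟨fun Y hY h => h1 Y hY ?_, h2, h3⟩
    rw [h, h3]
  · rintro ⟨h1, h2, h3⟩
    refine ⟨fun Y hY h => h1 Y hY ?_, h2, h3⟩
    rw [h3, top_sup_eq] at h
    exact frattini_nongenerating h

theorem closure_image_aux (G : Type*) [Group G] [Finite G] (X : Set G) :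
    Subgroup.closure ((QuotientGroup.mk' (frattini G)) '' X) = ⊤ ↔ Subgroup.closure X = ⊤ := by
  rw [← MonoidHom.map_closure]
  constructor
  · intro h
    apply frattini_nongenerating
    have h2 := congrArg (Subgroup.comap (QuotientGroup.mk' (frattini G))) h
    rw [Subgroup.comap_map_eq, QuotientGroup.ker_mk', Subgroup.comap_top] at h2
    exact h2
  · intro h
    rw [h]
    exact Subgroup.map_top_of_surjective _ (QuotientGroup.mk'_surjective _)

theorem exists_lift_aux {G H : Type*} [Group G] [Finite G] [Group H] (f : G →* H)
    (hf : Function.Surjective f) (x : H) (hx : IsPPElement x) :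
    ∃ g : G, f g = x ∧ IsPPElement g := by
  obtain ⟨g, rfl⟩ := hf x
  have hx' := hx
  obtain ⟨p, k, hp, hk, hpk⟩ := hx
  have hp := hp.nat_prime
  obtain ⟨a, m, hm, hn⟩ := Nat.exists_eq_pow_mul_and_not_dvd (orderOf_pos g).ne' p hp.ne_one
  have hc : Nat.Coprime m (p ^ k) :=
    Nat.Coprime.pow_right _ ((hp.coprime_iff_not_dvd.2 hm).symm)
  obtain ⟨u, hu⟩ := Nat.exists_mul_mod_eq_one_of_coprime hc (Nat.one_lt_pow hk.ne' hp.one_lt)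
  have hfg : f (g ^ (m * u)) = f g := by
    rw [map_pow, ← pow_mod_orderOf, ← hpk, hu.2, pow_one]
  refine ⟨g ^ (m * u), hfg, ?_⟩
  have hd : orderOf (g ^ (m * u)) ∣ p ^ a := by
    apply orderOf_dvd_of_pow_eq_one
    rw [← pow_mul, show m * u * p ^ a = (p ^ a * m) * u by ring, ← hn, pow_mul,
      pow_orderOf_eq_one, one_pow]
  obtain ⟨b, -, hb⟩ := (Nat.dvd_prime_pow hp).1 hd
  refine (isPrimePow_nat_iff _).2 ⟨p, b, hp, ?_, hb.symm⟩
  rcases Nat.eq_zero_or_pos b with rfl | h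
  · rw [pow_zero, orderOf_eq_one_iff] at hb
    rw [hb, map_one] at hfg
    rw [IsPPElement, ← hfg, orderOf_one] at hx'
    exact absurd rfl hx'.ne_one
  · exact h

theorem base_image_aux (G : Type*) [Group G] [Finite G] (X : Set G) (hX : IsPPBase G X) :
    IsPPBase (G ⧸ frattini G) ((QuotientGroup.mk' (frattini G)) '' X) ∧
      ((QuotientGroup.mk' (frattini G)) '' X).ncard = X.ncard := by
  rw [isPPBase_iff_aux] at hX ⊢
  obtain ⟨h1, h2, h3⟩ := hX
  have key : ∀ Y : Set G, Y ⊂ X →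
      Subgroup.closure ((QuotientGroup.mk' (frattini G)) '' Y) ≠ ⊤ := fun Y hY h =>
    h1 Y hY ((closure_image_aux G Y).1 h)
  have h3' := (closure_image_aux G X).2 h3
  set f := QuotientGroup.mk' (frattini G) with hf
  have key2 : ∀ x ∈ X, f x ∉ Subgroup.closure (f '' (X \ {x})) := by
    intro x hx hmem
    apply key (X \ {x}) (Set.sdiff_singleton_ssubset.2 hx)
    rw [eq_top_iff, ← h3', Subgroup.closure_le]
    rintro _ ⟨y, hy, rfl⟩
    by_cases hxy : y = x
    · rw [hxy]; exact hmem
    · exact Subgroup.subset_closure ⟨y, ⟨hy, hxy⟩, rfl⟩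
  refine ⟨⟨?_, ?_, h3'⟩, ?_⟩
  · intro Y hY h
    have hYe : f '' (X ∩ f ⁻¹' Y) = Y := by
      rw [Set.image_inter_preimage]
      exact Set.inter_eq_right.2 hY.subset
    refine key (X ∩ f ⁻¹' Y) ?_ (by rw [hYe]; exact h)
    refine Set.inter_subset_left.ssubset_of_ne fun he => ?_
    rw [he] at hYe
    exact hY.ne hYe.symm
  · rintro _ ⟨x, hx, rfl⟩
    have hne : f x ≠ 1 := fun h => key2 x hx (h ▸ Subgroup.one_mem _)
    obtain ⟨p, k, hp, hk, hpk⟩ := h2 x hx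
    have hp := hp.nat_prime
    obtain ⟨b, -, hb⟩ := (Nat.dvd_prime_pow hp).1 (hpk ▸ orderOf_map_dvd f x)
    refine (isPrimePow_nat_iff _).2 ⟨p, b, hp, ?_, hb.symm⟩
    rcases Nat.eq_zero_or_pos b with rfl | h
    · rw [pow_zero, orderOf_eq_one_iff] at hb
      exact absurd hb hne
    · exact h
  · apply Set.InjOn.ncard_image
    intro x hx y hy hxy
    by_contra hne
    apply key2 x hx
    rw [hxy]
    exact Subgroup.subset_closure ⟨y, ⟨hy, fun h => hne h.symm⟩, rfl⟩

theorem base_lift_aux (G : Type*) [Group G] [Finite G] (X : Set (G ⧸ frattini G))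
    (hX : IsPPBase (G ⧸ frattini G) X) : ∃ Y : Set G, IsPPBase G Y ∧ Y.ncard = X.ncard := by
  rw [isPPBase_iff_aux] at hX
  obtain ⟨h1, h2, h3⟩ := hX
  have hl : ∀ x : G ⧸ frattini G, ∃ g : G, (QuotientGroup.mk' (frattini G)) g = x ∧
      (x ∈ X → IsPPElement g) := by
    intro x
    by_cases hx : x ∈ X
    · obtain ⟨g, hg, hg'⟩ := exists_lift_aux _ (QuotientGroup.mk'_surjective (frattini G)) x
        (h2 x hx)
      exact ⟨g, hg, fun _ => hg'⟩
    · obtain ⟨g, hg⟩ := QuotientGroup.mk'_surjective (frattini G) x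
      exact ⟨g, hg, fun h => absurd h hx⟩
  choose s hs hs' using hl
  have hinj : Function.Injective s := Function.LeftInverse.injective hs
  have him : ∀ Z : Set (G ⧸ frattini G), (QuotientGroup.mk' (frattini G)) '' (s '' Z) = Z :=
    fun Z => Function.LeftInverse.image_image hs Z
  refine ⟨s '' X, (isPPBase_iff_aux _ _).2 ⟨?_, ?_, ?_⟩, Set.ncard_image_of_injective _ hinj⟩
  · intro Y hY h
    obtain ⟨Z, hZ, rfl⟩ := Set.subset_image_iff.1 hY.subset
    refine h1 Z (hZ.ssubset_of_ne ?_) ?_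
    · rintro rfl
      exact hY.ne rfl
    · rw [← him Z]
      exact (closure_image_aux G _).2 h
  · rintro _ ⟨x, hx, rfl⟩
    exact hs' x hx
  · rw [← closure_image_aux, him]
    exact h3

/-- A finite group `G` is a `B_pp`-group if and only if `G/Φ(G)` is a `B_pp`-group. -/
theorem isBpp_iff_isBpp_quotient_frattini (G : Type*) [Group G] [Finite G] :
    IsBpp G ↔ IsBpp (G ⧸ frattini G) := by
  constructor
  · intro h X Y hX hY
    obtain ⟨X', hX', eX⟩ := base_lift_aux G X hX
    obtain ⟨Y', hY', eY⟩ := base_lift_aux G Y hY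
    rw [← eX, ← eY]
    exact h _ _ hX' hY'
  · intro h X Y hX hY
    obtain ⟨hX', eX⟩ := base_image_aux G X hX
    obtain ⟨hY', eY⟩ := base_image_aux G Y hY
    rw [← eX, ← eY]
    exact h _ _ hX' hY'
end

section
/- Let H be a finite almost simple group with socle S and suppose H ≠ S. If for every g ∈ H \ S there exists a pp-element s ∈ S with P(g, s) < 1, then for every subgroup K of H with H = KS there exists a pp-element x ∈ S such that H = ⟨K, x⟩ (that is, t(H) = 1). -/
open scoped Pointwise

/-- `P(g,s)`: the proportion of elements `t` of the conjugacy class of `s` in `H` such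
that `⟨g, t⟩` does not contain `S`. -/
noncomputable def probNotGen {H : Type*} [Group H] (S : Subgroup H) (g s : H) : ℚ :=
  ({t : H | IsConj s t ∧ ¬ S ≤ Subgroup.closure {g, t}}.ncard : ℚ) /
    ({t : H | IsConj s t}.ncard : ℚ)

/-- Let `H` be a finite almost simple group with socle `S` (a nonabelian simple normal
subgroup with trivial centralizer) and `H ≠ S`. If for every `g ∈ H \ S` there exists a
`pp`-element `s ∈ S` with `P(g,s) < 1`, then for every subgroup `K` of `H` with `H = KS`
there exists a `pp`-element `x ∈ S` with `H = ⟨K, x⟩`, i.e. `t(H) = 1`. -/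
theorem t_eq_one_of_prob (H : Type*) [Group H] [Finite H] (S : Subgroup H)
    [S.Normal] (hsimple : IsSimpleGroup S) (hnonab : ¬ ∀ a b : S, a * b = b * a)
    (hcent : Subgroup.centralizer (S : Set H) = ⊥)
    (hne : S ≠ ⊤)
    (hyp : ∀ g : H, g ∉ S → ∃ s ∈ S, IsPPElement s ∧ probNotGen S g s < 1) :
    ∀ K : Subgroup H, (K : Set H) * (S : Set H) = Set.univ →
      ∃ x ∈ S, IsPPElement x ∧ K ⊔ Subgroup.closure {x} = ⊤ := by
  intro K hK
  have hg : ∃ g ∈ K, g ∉ S := by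
    by_contra hcon
    push Not at hcon
    apply hne
    rw [eq_top_iff]
    intro h _
    have hh : h ∈ (K : Set H) * (S : Set H) := by rw [hK]; trivial
    obtain ⟨k, hk, s, hs, rfl⟩ := Set.mem_mul.mp hh
    exact S.mul_mem (hcon k hk) hs
  obtain ⟨g, hgK, hgS⟩ := hg
  obtain ⟨s, hsS, hpp, hP⟩ := hyp g hgS
  have ht : ∃ t, IsConj s t ∧ S ≤ Subgroup.closure {g, t} := by
    by_contra hcon
    push Not at hcon
    have heq : {t : H | IsConj s t ∧ ¬ S ≤ Subgroup.closure {g, t}} = {t : H | IsConj s t} := by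
      ext t
      exact ⟨fun h => h.1, fun h => ⟨h, hcon t h⟩⟩
    have hpos : 0 < {t : H | IsConj s t}.ncard :=
      (Set.ncard_pos (Set.toFinite _)).mpr ⟨s, IsConj.refl s⟩
    unfold probNotGen at hP
    rw [heq, div_self (by exact_mod_cast hpos.ne')] at hP
    exact lt_irrefl _ hP
  obtain ⟨t, hst, hle⟩ := ht
  obtain ⟨c, rfl⟩ := isConj_iff.mp hst
  refine ⟨c * s * c⁻¹, Subgroup.Normal.conj_mem inferInstance s hsS c, ?_, ?_⟩
  · have ho : orderOf (c * s * c⁻¹) = orderOf s := by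
      simpa using (MulAut.conj c).orderOf_eq s
    unfold IsPPElement
    rw [ho]
    exact hpp
  · have hS : S ≤ K ⊔ Subgroup.closure {c * s * c⁻¹} := by
      refine hle.trans ((Subgroup.closure_le _).mpr ?_)
      rintro y (rfl | rfl)
      · exact (le_sup_left : K ≤ _) hgK
      · exact (le_sup_right : Subgroup.closure _ ≤ _) (Subgroup.subset_closure rfl)
    rw [eq_top_iff]
    intro h _
    have hh : h ∈ (K : Set H) * (S : Set H) := by rw [hK]; trivial
    obtain ⟨k, hk, s', hs', rfl⟩ := Set.mem_mul.mp hh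
    exact Subgroup.mul_mem _ ((le_sup_left : K ≤ _) hk) (hS hs')
end

section
/- Let H be a finite almost simple group with socle S and suppose H ≠ S. If for every g ∈ H \ S there exists a pp-element s ∈ S such that Σ_{M ∈ M(H,s)} μ(g, M\H) < 1 (the sum of the fixed point ratios of g on the coset spaces of the maximal subgroups of H containing s), then for every subgroup K of H with H = KS there exists a pp-element x ∈ S such that H = ⟨K, x⟩ (that is, t(H) = 1). -/
open scoped Pointwise

/-- The fixed point ratio `μ(g, M\H)` of `g ∈ H` acting by right multiplication on the
set of right cosets of `M` in `H`: the number of right cosets `C` with `Cg = C`,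
divided by the total number of right cosets. -/
noncomputable def rightCosetFPR (H : Type*) [Group H] (M : Subgroup H) (g : H) : ℚ :=
  ({C : Quotient (QuotientGroup.rightRel M) |
      ∀ w : H, Quotient.mk (QuotientGroup.rightRel M) w = C →
        Quotient.mk (QuotientGroup.rightRel M) (w * g) = C}.ncard : ℚ) /
    (Nat.card (Quotient (QuotientGroup.rightRel M)) : ℚ)

theorem ncard_conj_mem_le (H : Type*) [Group H] [Finite H] (M : Subgroup H) (g : H) :
    (({h : H | h * g * h⁻¹ ∈ M}.ncard : ℕ) : ℚ) ≤ rightCosetFPR H M g * (Nat.card H : ℚ) := by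
  classical
  unfold rightCosetFPR
  set F := {C : Quotient (QuotientGroup.rightRel M) |
      ∀ w : H, Quotient.mk (QuotientGroup.rightRel M) w = C →
        Quotient.mk (QuotientGroup.rightRel M) (w * g) = C} with hF
  have hout : ∀ h : H, h * ((Quotient.mk (QuotientGroup.rightRel M) h).out)⁻¹ ∈ M := by
    intro h
    have := Quotient.exact (Quotient.out_eq (Quotient.mk (QuotientGroup.rightRel M) h))
    exact QuotientGroup.rightRel_apply.mp this
  have hmem : ∀ h : H, h * g * h⁻¹ ∈ M → Quotient.mk (QuotientGroup.rightRel M) h ∈ F := by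
    intro h hh w hw
    rw [← hw]
    apply Quotient.sound
    apply QuotientGroup.rightRel_apply.mpr
    have h1 : h * w⁻¹ ∈ M := QuotientGroup.rightRel_apply.mp (Quotient.exact hw)
    have h2 := M.mul_mem (M.mul_mem (M.inv_mem h1) (M.inv_mem hh)) h1
    convert h2 using 1
    group
  have hle : {h : H | h * g * h⁻¹ ∈ M}.ncard ≤ F.ncard * Nat.card M := by
    rw [← Nat.card_coe_set_eq, ← Nat.card_coe_set_eq, ← Nat.card_prod]
    refine Nat.card_le_card_of_injective (fun h => (⟨_, hmem h.1 h.2⟩, ⟨_, hout h.1⟩)) ?_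
    rintro ⟨a, ha⟩ ⟨b, hb⟩ hab
    simp only [Prod.mk.injEq, Subtype.mk.injEq] at hab ⊢
    obtain ⟨h1, h2⟩ := hab
    rw [h1] at h2
    exact mul_right_cancel h2
  have hcard : Nat.card H = Nat.card (Quotient (QuotientGroup.rightRel M)) * Nat.card M := by
    rw [Subgroup.card_eq_card_quotient_mul_card_subgroup M,
      Nat.card_congr (QuotientGroup.quotientRightRelEquivQuotientLeftRel M)]
  have hpos : (0 : ℚ) < Nat.card (Quotient (QuotientGroup.rightRel M)) := by
    have : Nonempty (Quotient (QuotientGroup.rightRel M)) := ⟨Quotient.mk _ 1⟩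
    exact_mod_cast Nat.card_pos
  rw [hcard]
  push_cast
  rw [← mul_assoc, div_mul_cancel₀ _ hpos.ne']
  exact_mod_cast hle

/-- Let `H` be a finite almost simple group with socle `S` (a nonabelian simple normal
subgroup with trivial centralizer) and `H ≠ S`. If for every `g ∈ H \ S` there exists a
`pp`-element `s ∈ S` such that the sum over the maximal subgroups `M` of `H` containing
`s` of the fixed point ratios `μ(g, M\H)` is less than `1`, then for every subgroup `K`
of `H` with `H = KS` there is a `pp`-element `x ∈ S` with `H = ⟨K, x⟩`, i.e. `t(H) = 1`. -/
theorem t_eq_one_of_fpr_sum (H : Type*) [Group H] [Finite H] (S : Subgroup H)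
    [S.Normal] (hsimple : IsSimpleGroup S) (hnonab : ¬ ∀ a b : S, a * b = b * a)
    (hcent : Subgroup.centralizer (S : Set H) = ⊥)
    (hne : S ≠ ⊤)
    (hyp : ∀ g : H, g ∉ S → ∃ s ∈ S, IsPPElement s ∧
      ∑ᶠ M ∈ {M : Subgroup H | IsCoatom M ∧ s ∈ M}, rightCosetFPR H M g < 1) :
    ∀ K : Subgroup H, (K : Set H) * (S : Set H) = Set.univ →
      ∃ x ∈ S, IsPPElement x ∧ K ⊔ Subgroup.closure {x} = ⊤ := by
  classical
  intro K hK
  obtain ⟨g, hgK, hgS⟩ : ∃ g ∈ K, g ∉ S := by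
    by_contra! hcon
    apply hne
    rw [eq_top_iff]
    intro x _
    have hx : x ∈ (K : Set H) * (S : Set H) := hK ▸ Set.mem_univ x
    obtain ⟨k, hk, s, hs, rfl⟩ := Set.mem_mul.mp hx
    exact S.mul_mem (hcon k hk) hs
  obtain ⟨s, hsS, hpp, hsum⟩ := hyp g hgS
  by_contra! hcon
  have hfin : {M : Subgroup H | IsCoatom M ∧ s ∈ M}.Finite := Set.toFinite _
  rw [finsum_mem_eq_finite_toFinset_sum _ hfin] at hsum
  have hcover : ∀ h : H, ∃ M ∈ hfin.toFinset, h * g * h⁻¹ ∈ M := by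
    intro h
    have h1 : h⁻¹ * s * h ∈ S := by
      simpa using (inferInstance : S.Normal).conj_mem s hsS h⁻¹
    have h2 : IsPPElement (h⁻¹ * s * h) := by
      have : orderOf (h⁻¹ * s * h) = orderOf s := by
        have := orderOf_injective (MulAut.conj h⁻¹).toMonoidHom (MulAut.conj h⁻¹).injective s
        simpa using this
      unfold IsPPElement
      rw [this]
      exact hpp
    obtain ⟨M, hM, hle⟩ := (eq_top_or_exists_le_coatom _).resolve_left (hcon _ h1 h2)
    have hgM : g ∈ M := hle (Subgroup.mem_sup_left hgK)
    have hsM : h⁻¹ * s * h ∈ M :=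
      hle (Subgroup.mem_sup_right (Subgroup.subset_closure rfl))
    refine ⟨M.map (MulAut.conj h).toMonoidHom, ?_, ?_⟩
    · rw [Set.Finite.mem_toFinset]
      refine ⟨?_, ⟨_, hsM, by simp [mul_assoc]⟩⟩
      exact ((MulAut.conj h).mapSubgroup.isCoatom_iff M).mpr hM
    · exact ⟨g, hgM, by simp⟩
  have hcount : Nat.card H ≤ ∑ M ∈ hfin.toFinset, {h : H | h * g * h⁻¹ ∈ M}.ncard := by
    have := Fintype.ofFinite H
    have hsub : (Finset.univ : Finset H) ⊆
        hfin.toFinset.biUnion (fun M => {h : H | h * g * h⁻¹ ∈ M}.toFinset) := by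
      intro h _
      obtain ⟨M, hM, hh⟩ := hcover h
      rw [Finset.mem_biUnion]
      exact ⟨M, hM, by simpa using hh⟩
    have h3 := (Finset.card_le_card hsub).trans Finset.card_biUnion_le
    simpa only [Finset.card_univ, ← Nat.card_eq_fintype_card, ← Set.ncard_eq_toFinset_card'] using h3
  have hpos : (0 : ℚ) < Nat.card H := by exact_mod_cast Nat.card_pos
  have hfinal : (Nat.card H : ℚ) ≤
      (∑ M ∈ hfin.toFinset, rightCosetFPR H M g) * (Nat.card H : ℚ) := by
    rw [Finset.sum_mul]
    calc (Nat.card H : ℚ)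
        ≤ ((∑ M ∈ hfin.toFinset, {h : H | h * g * h⁻¹ ∈ M}.ncard : ℕ) : ℚ) := by
          exact_mod_cast hcount
      _ = ∑ M ∈ hfin.toFinset, ({h : H | h * g * h⁻¹ ∈ M}.ncard : ℚ) := by push_cast; rfl
      _ ≤ _ := Finset.sum_le_sum fun M _ => ncard_conj_mem_le H M g
  nlinarith
end

section
/- Let H be a finite almost simple group with socle S and let g, s ∈ H. Then P(g, s) ≤ Σ_{M ∈ M(H,s)} μ(g, M\H), where the sum runs over the maximal subgroups M of H containing s and μ(g, M\H) is the fixed point ratio of g acting on the right cosets of M in H. -/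
lemma ncard_preimage_aux {H X : Type*} [Group H] (K : Subgroup H) (f : H → X)
    (hf : ∀ x y, f x = f y ↔ y * x⁻¹ ∈ K) (A : Set X) (hA : ∀ a ∈ A, ∃ x, f x = a) :
    (f ⁻¹' A).ncard = Nat.card K * A.ncard := by
  have hA' : ∀ a : A, ∃ x, f x = a := fun a => hA a a.2
  choose r hr using hA'
  have hk : ∀ (k : K) (x : H), f (k * x) = f x := by
    intro k x
    rw [eq_comm, hf]
    simp
  rw [← Nat.card_coe_set_eq, ← Nat.card_coe_set_eq, ← Nat.card_prod]
  symm
  refine Nat.card_congr (Equiv.ofBijective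
    (fun p : K × A => (⟨(p.1 : H) * r p.2, ?_⟩ : (f ⁻¹' A : Set H))) ⟨?_, ?_⟩)
  · show f _ ∈ A
    rw [hk, hr]
    exact p.2.2
  · rintro ⟨k, a⟩ ⟨l, b⟩ h
    have h1 : (k : H) * r a = l * r b := congrArg Subtype.val h
    have h2 : a = b := by
      have := congrArg f h1
      rw [hk, hk, hr, hr] at this
      exact Subtype.ext this
    subst h2
    have h3 : k = l := Subtype.ext (mul_right_cancel h1)
    rw [h3]
  · rintro ⟨x, hx⟩
    have h1 : f (r ⟨f x, hx⟩) = f x := hr ⟨f x, hx⟩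
    refine ⟨(⟨_, (hf _ _).1 h1⟩, ⟨f x, hx⟩), ?_⟩
    apply Subtype.ext
    simp

lemma ratio_aux {H X : Type*} [Group H] [Finite H] (K : Subgroup H) (f : H → X)
    (hf : ∀ x y, f x = f y ↔ y * x⁻¹ ∈ K) (A B : Set X) (hB : B = Set.range f) (hA : A ⊆ B) :
    (A.ncard : ℚ) / (B.ncard : ℚ) = ((f ⁻¹' A).ncard : ℚ) / (Nat.card H : ℚ) := by
  subst hB
  have h1 := ncard_preimage_aux K f hf A (fun a ha => hA ha)
  have h2 := ncard_preimage_aux K f hf (Set.range f) (fun a ha => ha)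
  rw [Set.preimage_range, Set.ncard_univ] at h2
  have hK : (Nat.card K : ℚ) ≠ 0 := by exact_mod_cast Nat.card_pos.ne'
  rw [h1, h2]
  push_cast
  rw [mul_div_mul_left _ _ hK]

lemma probNotGen_eq_aux {H : Type*} [Group H] [Finite H] (S : Subgroup H) (g s : H) :
    probNotGen S g s =
      ({x : H | ¬ S ≤ Subgroup.closure {g, x⁻¹ * s * x}}.ncard : ℚ) / (Nat.card H : ℚ) := by
  have hc : ∀ x : H, IsConj s (x⁻¹ * s * x) := fun x => isConj_iff.2 ⟨x⁻¹, by simp⟩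
  unfold probNotGen
  rw [ratio_aux (Subgroup.centralizer {s}) (fun x : H => x⁻¹ * s * x)]
  · congr 3
    ext x
    exact ⟨fun h => h.2, fun h => ⟨hc x, h⟩⟩
  · intro x y
    rw [Subgroup.mem_centralizer_singleton_iff]
    constructor
    · intro h
      have : s = x * (y⁻¹ * s * y) * x⁻¹ := by rw [← h]; group
      calc y * x⁻¹ * s = y * x⁻¹ * (x * (y⁻¹ * s * y) * x⁻¹) := by rw [← this]
        _ = _ := by group
    · intro h
      calc x⁻¹ * s * x = y⁻¹ * (y * x⁻¹ * s) * x := by group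
        _ = _ := by rw [h]; group
  · ext t
    constructor
    · intro h
      obtain ⟨c, hc⟩ := isConj_iff.1 h
      exact ⟨c⁻¹, by simpa using hc⟩
    · rintro ⟨x, rfl⟩
      exact hc x
  · exact fun t ht => ht.1

lemma rightCosetFPR_eq_aux {H : Type*} [Group H] [Finite H] (M : Subgroup H) (g : H) :
    rightCosetFPR H M g = ({x : H | x * g * x⁻¹ ∈ M}.ncard : ℚ) / (Nat.card H : ℚ) := by
  have hf : ∀ x y : H, Quotient.mk (QuotientGroup.rightRel M) x =
      Quotient.mk (QuotientGroup.rightRel M) y ↔ y * x⁻¹ ∈ M := by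
    intro x y
    rw [Quotient.eq, QuotientGroup.rightRel_apply]
  unfold rightCosetFPR
  rw [← Set.ncard_univ, ratio_aux M (Quotient.mk (QuotientGroup.rightRel M)) hf]
  · congr 3
    ext x
    simp only [Set.mem_preimage, Set.mem_setOf_eq]
    constructor
    · intro h
      have := (hf _ _).1 (h x rfl).symm
      exact this
    · intro h w hw
      rw [← hw, eq_comm, hf]
      have h1 := (hf _ _).1 hw
      have h2 := M.mul_mem (M.mul_mem (M.inv_mem h1) h) h1
      convert h2 using 1
      group
  · ext q
    simp only [Set.mem_univ, true_iff]
    exact Quotient.exists_rep q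
  · exact Set.subset_univ _

/-- Let `H` be a finite almost simple group with socle `S` (a nonabelian simple normal
subgroup with trivial centralizer) and let `g, s ∈ H`. Then
`P(g,s) ≤ Σ_{M ∈ M(H,s)} μ(g, M\H)`, the sum running over the maximal subgroups of `H`
containing `s`. -/
theorem probNotGen_le_sum_fpr (H : Type*) [Group H] [Finite H] (S : Subgroup H)
    [S.Normal] (hsimple : IsSimpleGroup S) (hnonab : ¬ ∀ a b : S, a * b = b * a)
    (hcent : Subgroup.centralizer (S : Set H) = ⊥)
    (g s : H) :
    probNotGen S g s ≤ ∑ᶠ M ∈ {M : Subgroup H | IsCoatom M ∧ s ∈ M}, rightCosetFPR H M g := by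
  classical
  have hfin : {M : Subgroup H | IsCoatom M ∧ s ∈ M}.Finite := Set.toFinite _
  rw [finsum_mem_eq_finite_toFinset_sum _ hfin, probNotGen_eq_aux]
  simp_rw [rightCosetFPR_eq_aux]
  rw [← Finset.sum_div]
  gcongr
  have hsub : {x : H | ¬ S ≤ Subgroup.closure {g, x⁻¹ * s * x}} ⊆
      ⋃ M ∈ hfin.toFinset, {x : H | x * g * x⁻¹ ∈ M} := by
    intro x hx
    have hne : Subgroup.closure {g, x⁻¹ * s * x} ≠ ⊤ := by
      intro h
      exact hx (h ▸ le_top)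
    obtain ⟨N, hN, hle⟩ := (eq_top_or_exists_le_coatom _).resolve_left hne
    have hg : g ∈ N := hle (Subgroup.subset_closure (by simp))
    have ht : x⁻¹ * s * x ∈ N := hle (Subgroup.subset_closure (by simp))
    have hmem : ∀ y : H, y ∈ N.map (MulAut.conj x).toMonoidHom ↔ x⁻¹ * y * x ∈ N := by
      intro y
      constructor
      · rintro ⟨z, hz, rfl⟩
        simpa [mul_assoc] using hz
      · intro h
        exact ⟨_, h, by simp [mul_assoc]⟩
    simp only [Set.mem_iUnion]
    refine ⟨N.map (MulAut.conj x).toMonoidHom, ?_, ?_⟩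
    · rw [Set.Finite.mem_toFinset]
      refine ⟨?_, (hmem s).2 ht⟩
      exact ((MulAut.conj x).mapSubgroup.isCoatom_iff N).2 hN
    · show _ ∈ N.map _
      rw [hmem]
      simpa [mul_assoc] using hg
  have h1 := (Set.ncard_le_ncard hsub (Set.toFinite _)).trans
    (Finset.set_ncard_biUnion_le hfin.toFinset _)
  exact_mod_cast h1
end
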